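/- Let V be a finite-dimensional Gel'fand–Dorfman bialgebra over ℂ such that either (V,∘) is a simple Novikov algebra, or there exists x ∈ V and k ∈ ℂ∖{0} with b∘x = k·b for all b ∈ V. Let n be a natural number and let d^0,…,d^n be linear maps from V into the space of polynomial maps ℂ → V satisfying the conformal derivation equation (E). Then d^i = 0 for all i > 3, and the maps d^0, d^1, d^2, d^3 (set d^i = 0 for i > n) satisfy identities (D1)–(D13) for all a, b ∈ V and λ ∈ ℂ. -/

import Mathlib

/-- The identities (D1)–(D13) of Theorem 4.3(2) for maps `d^0, d^1, d^2, d^3`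
(given as `d 0, d 1, d 2, d 3`) on the Gel'fand–Dorfman bialgebra `(V, circ, br)`. -/
def DIdentities {V : Type*} [AddCommGroup V] [Module ℂ V]
    (circ br : V →ₗ[ℂ] V →ₗ[ℂ] V) (d : ℕ → V →ₗ[ℂ] (ℂ → V)) : Prop :=
  ∀ (a b : V) (l : ℂ),
    -- (D1)
    (d 3 (circ b a) l = d 3 (circ a b) l ∧ d 3 (circ a b) l = circ (d 3 b l) a)
    -- (D2)
    ∧ circ b (d 3 a l) = circ a (d 3 b l)
    -- (D3)
    ∧ (2 : ℂ) • circ (d 3 b l) a + circ a (d 3 b l) = 0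
    -- (D4)
    ∧ l • d 3 (circ b a) l + d 2 (circ b a) l + d 3 (br b a) l
        = br (d 3 b l) a + circ (d 2 b l) a
    -- (D5)
    ∧ d 2 (circ a b + circ b a) l
        = (2 : ℂ) • circ (d 2 b l) a + (circ (d 2 b l) a + circ a (d 2 b l))
          + (3 : ℂ) • br (d 3 b l) a
    -- (D6)
    ∧ (-(3 * l)) • circ b (d 3 a l) + circ b (d 2 a l) + circ (d 2 b l) a
        + (2 : ℂ) • (circ (d 2 b l) a + circ a (d 2 b l))
        + (3 : ℂ) • br (d 3 b l) a = 0
    -- (D7)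
    ∧ (-(4 * l)) • (circ (d 3 a l) b + circ b (d 3 a l))
        + (circ (d 2 a l) b + circ b (d 2 a l)) - br b (d 3 a l)
        + (circ (d 2 b l) a + circ a (d 2 b l)) + br (d 3 b l) a = 0
    -- (D8)
    ∧ l • d 2 (circ b a) l + d 1 (circ b a) l + d 2 (br b a) l
        = circ (d 1 b l) a + br (d 2 b l) a
    -- (D9)
    ∧ d 1 (circ a b + circ b a) l
        = (∑ i ∈ Finset.Icc (1 : ℕ) 3, ((-1 : ℂ) ^ i * l ^ (i - 1)) • circ b (d i a l))
          + circ (d 1 b l) a + (circ (d 1 b l) a + circ a (d 1 b l))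
          + (2 : ℂ) • br (d 2 b l) a
    -- (D10)
    ∧ (∑ i ∈ Finset.Icc (1 : ℕ) 3, ((-1 : ℂ) ^ i * (Nat.choose (i + 1) 2 : ℂ) * l ^ (i - 1)) •
          (circ (d i a l) b + circ b (d i a l)))
        + (∑ i ∈ Finset.Icc (2 : ℕ) 3, ((-1 : ℂ) ^ i * (Nat.choose i 2 : ℂ) * l ^ (i - 2)) •
          br b (d i a l))
        + (circ (d 1 b l) a + circ a (d 1 b l)) + br (d 2 b l) a = 0
    -- (D11)
    ∧ l • d 1 (circ b a) l + d 0 (circ b a) l + d 1 (br b a) l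
        = (∑ i ∈ Finset.range 4, ((-1 : ℂ) ^ i * l ^ i) • circ b (d i a l))
          + circ (d 0 b l) a + br (d 1 b l) a
    -- (D12)
    ∧ d 0 (circ a b + circ b a) l
        = (∑ i ∈ Finset.range 4, ((-1 : ℂ) ^ i * ((i : ℂ) + 1) * l ^ i) •
            (circ (d i a l) b + circ b (d i a l)))
          + (∑ i ∈ Finset.Icc (1 : ℕ) 3, ((-1 : ℂ) ^ i * (i : ℂ) * l ^ (i - 1)) • br b (d i a l))
          + (circ (d 0 b l) a + circ a (d 0 b l)) + br (d 1 b l) a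
    -- (D13)
    ∧ l • d 0 (circ b a) l + d 0 (br b a) l
        = (∑ i ∈ Finset.range 4, ((-1 : ℂ) ^ i * l ^ (i + 1)) •
            (circ (d i a l) b + circ b (d i a l)))
          + (∑ i ∈ Finset.range 4, ((-1 : ℂ) ^ i * l ^ i) • br b (d i a l))
          + br (d 0 b l) a

/-- The conformal derivation equation (E) for a family `d^0, …, d^n` of linear maps
from `V` into maps `ℂ → V`, on the quadratic Lie conformal algebra of the
Gel'fand–Dorfman bialgebra `(V, circ, br)`; the formal variable `∂` is evaluated
at `x : ℂ`. -/
def ConfDerEq {V : Type*} [AddCommGroup V] [Module ℂ V]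
    (circ br : V →ₗ[ℂ] V →ₗ[ℂ] V) (n : ℕ) (d : ℕ → V →ₗ[ℂ] (ℂ → V)) : Prop :=
  ∀ (a b : V) (l m x : ℂ),
    (x + l) • (∑ i ∈ Finset.range (n + 1), x ^ i • d i (circ b a) l)
      + m • (∑ i ∈ Finset.range (n + 1), x ^ i • d i (circ a b + circ b a) l)
      + (∑ i ∈ Finset.range (n + 1), x ^ i • d i (br b a) l)
    = (∑ i ∈ Finset.range (n + 1), (-l - m) ^ i •
        (x • circ b (d i a l) + (l + m) • (circ (d i a l) b + circ b (d i a l))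
          + br b (d i a l)))
      + (∑ i ∈ Finset.range (n + 1), (m + x) ^ i •
        (x • circ (d i b l) a + m • (circ (d i b l) a + circ a (d i b l))
          + br (d i b l) a))

/-- `(V, circ)` is a simple Novikov algebra: it has only the trivial ideals and the
product is not identically zero. -/
def NovikovSimple {V : Type*} [AddCommGroup V] [Module ℂ V]
    (circ : V →ₗ[ℂ] V →ₗ[ℂ] V) : Prop :=
  (∃ a b : V, circ a b ≠ 0)
    ∧ ∀ I : Submodule ℂ V,
        (∀ a ∈ I, ∀ b : V, circ a b ∈ I ∧ circ b a ∈ I) → I = ⊥ ∨ I = ⊤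

section Helpers
open Polynomial

lemma aux_coeff (a b u v : ℂ) (i n : ℕ) (hi : i ≤ n) :
    ((C a + C b * X) ^ i * (C u + C v * X) : ℂ[X]).coeff (n + 1)
      = if i = n then b ^ n * v else 0 := by
  have hdeg : (C a + C b * X : ℂ[X]).natDegree ≤ 1 := by compute_degree
  have hpd : ((C a + C b * X : ℂ[X]) ^ i).natDegree ≤ i := by
    simpa using natDegree_pow_le_of_le i hdeg
  have h1 : ((C a + C b * X : ℂ[X]) ^ i).coeff (n + 1) = 0 :=
    coeff_eq_zero_of_natDegree_lt (by omega)
  rw [mul_add, ← mul_assoc, coeff_add, coeff_mul_C, coeff_mul_X, coeff_mul_C, h1]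
  split_ifs with h
  · subst h
    have := coeff_pow_of_natDegree_le (m := i) hdeg
    rw [mul_one] at this
    rw [this]; simp
  · rw [coeff_eq_zero_of_natDegree_lt (by omega : _ < n)]; simp

lemma aux_sum_coeff (a b : ℂ) (u v : ℕ → ℂ) (n : ℕ) :
    (∑ i ∈ Finset.range (n + 1), (C a + C b * X) ^ i * (C (u i) + C (v i) * X) : ℂ[X]).coeff (n + 1)
      = b ^ n * v n := by
  rw [finsetSum_coeff, Finset.sum_range_succ, aux_coeff _ _ _ _ _ _ le_rfl, if_pos rfl,
    Finset.sum_eq_zero, zero_add]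
  intro i hi
  rw [Finset.mem_range] at hi
  rw [aux_coeff _ _ _ _ _ _ hi.le, if_neg hi.ne]

lemma aux_top (n : ℕ) (hn : 4 ≤ n) (l : ℂ) (p q r u w z P Q Z : ℕ → ℂ)
    (h : ∀ m x : ℂ,
      (x + l) * (∑ i ∈ Finset.range (n + 1), x ^ i * p i)
      + m * (∑ i ∈ Finset.range (n + 1), x ^ i * q i)
      + (∑ i ∈ Finset.range (n + 1), x ^ i * r i)
      = (∑ i ∈ Finset.range (n + 1), (-l - m) ^ i * (x * u i + (l + m) * w i + z i))
      + (∑ i ∈ Finset.range (n + 1), (m + x) ^ i * (x * P i + m * Q i + Z i))) :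
    P n = 0 := by
  have key : ∀ s : ℂ, p n + s * q n
      = (-s) ^ n * (u n + s * w n) + (1 + s) ^ n * (P n + s * Q n) := by
    intro s
    have hp : (∑ i ∈ Finset.range (n + 1),
          (C 0 + C 1 * X) ^ i * (C (l * p i + r i) + C (p i + s * q i) * X) : ℂ[X])
        = (∑ i ∈ Finset.range (n + 1),
          (C (-l) + C (-s) * X) ^ i * (C (l * w i + z i) + C (u i + s * w i) * X))
        + (∑ i ∈ Finset.range (n + 1),
          (C 0 + C (1 + s) * X) ^ i * (C (Z i) + C (P i + s * Q i) * X)) := by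
      apply Polynomial.funext
      intro t
      have ht := h (s * t) t
      simp only [Finset.mul_sum, ← Finset.sum_add_distrib] at ht
      simp only [eval_add, eval_finsetSum, eval_mul, eval_pow, eval_C, eval_X]
      rw [← Finset.sum_add_distrib]
      convert ht using 2 <;> ring
    have hc := congrArg (fun f => coeff f (n + 1)) hp
    simp only [coeff_add, aux_sum_coeff] at hc
    simpa using hc
  have hp : (C (p n) + C (q n) * X : ℂ[X])
      = C ((-1) ^ n) * (C (u n) + C (w n) * X) * X ^ n
        + (1 + X) ^ n * (C (P n) + C (Q n) * X) := by
    apply Polynomial.funext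
    intro s
    have := key s
    rw [neg_pow] at this
    simp only [eval_add, eval_mul, eval_pow, eval_C, eval_X, eval_one]
    linear_combination this
  have h2 := congrArg (fun f => coeff f 2) hp
  have h3 := congrArg (fun f => coeff f 3) hp
  simp only [mul_add, ← mul_assoc, coeff_add, coeff_mul_C, coeff_mul_X, coeff_C_succ,
    coeff_one_add_X_pow, coeff_mul_X_pow', add_mul, coeff_C] at h2 h3
  have n2 : ¬ n ≤ 2 := by omega
  have n3 : ¬ n ≤ 3 := by omega
  simp only [n2, n3, if_false] at h2 h3
  simp at h2 h3
  have e3 := Nat.choose_succ_right_eq n 2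
  have e2 := Nat.choose_succ_right_eq n 1
  obtain ⟨k, rfl⟩ : ∃ k, n = k + 4 := ⟨n - 4, by omega⟩
  have e3' : ((k + 4).choose 3 : ℂ) * 3 = ((k + 4).choose 2 : ℂ) * (k + 2) := by
    exact_mod_cast e3
  have e2' : ((k + 4).choose 2 : ℂ) * 2 = (k + 4) * (k + 3) := by
    have : (k + 4).choose 2 * 2 = (k + 4) * (k + 3) := by simpa using e2
    exact_mod_cast this
  generalize ((k + 4).choose 3 : ℂ) = c3 at *
  generalize ((k + 4).choose 2 : ℂ) = c2 at *
  push_cast at h2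
  have hk4 : (k + 4 : ℂ) ≠ 0 := by exact_mod_cast (by omega : k + 4 ≠ 0)
  have hk3 : (k + 3 : ℂ) ≠ 0 := by exact_mod_cast (by omega : k + 3 ≠ 0)
  have hk5 : (k + 5 : ℂ) ≠ 0 := by exact_mod_cast (by omega : k + 5 ≠ 0)
  have e : (k + 4 : ℂ) * (k + 3) * (k + 5) * P (k + 4) = 0 := by
    linear_combination -6 * (k + 3) * h2 + 12 * h3 - 3 * (k + 3) * P (k + 4) * e2'
      + 4 * P (k + 4) * e3' + 2 * P (k + 4) * (k + 2) * e2' + 6 * Q (k + 4) * e2'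
  simpa [hk3, hk4, hk5] using e
end Helpers
section Helpers2

lemma aux_four {V : Type*} [AddCommGroup V] [Module ℂ V] (c0 c1 c2 c3 c4 : V)
    (h : ∀ x : ℂ, c0 + x • c1 + x ^ 2 • c2 + x ^ 3 • c3 + x ^ 4 • c4 = 0) :
    c0 = 0 ∧ c1 = 0 ∧ c2 = 0 ∧ c3 = 0 ∧ c4 = 0 := by
  have h0 := h 0
  have h1 := h 1
  have h2 := h (-1)
  have h3 := h 2
  have h4 := h (-2)
  refine ⟨?_, ?_, ?_, ?_, ?_⟩
  · linear_combination (norm := module) h0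
  · linear_combination (norm := module) (2/3 : ℂ) • h1 - (2/3 : ℂ) • h2 - (1/12 : ℂ) • h3 + (1/12 : ℂ) • h4
  · linear_combination (norm := module) (2/3 : ℂ) • h1 + (2/3 : ℂ) • h2 - (1/24 : ℂ) • h3 - (1/24 : ℂ) • h4 - (5/4 : ℂ) • h0
  · linear_combination (norm := module) (-1/6 : ℂ) • h1 + (1/6 : ℂ) • h2 + (1/12 : ℂ) • h3 - (1/12 : ℂ) • h4
  · linear_combination (norm := module) (-1/6 : ℂ) • h1 - (1/6 : ℂ) • h2 + (1/24 : ℂ) • h3 + (1/24 : ℂ) • h4 + (1/4 : ℂ) • h0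

lemma aux_two {V : Type*} [AddCommGroup V] [Module ℂ V] (c0 c1 c2 : V)
    (h : ∀ x : ℂ, c0 + x • c1 + x ^ 2 • c2 = 0) : c0 = 0 ∧ c1 = 0 ∧ c2 = 0 := by
  have := aux_four c0 c1 c2 0 0 (by intro x; simpa using h x)
  exact ⟨this.1, this.2.1, this.2.2.1⟩

lemma aux_one {V : Type*} [AddCommGroup V] [Module ℂ V] (c0 c1 : V)
    (h : ∀ x : ℂ, c0 + x • c1 = 0) : c0 = 0 ∧ c1 = 0 := by
  have := aux_four c0 c1 0 0 0 (by intro x; simpa using h x)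
  exact ⟨this.1, this.2.1⟩

/-- In a finite-dimensional space, a polynomial family of operators `D l` with
`[T, D l] = (l k) D l`, `k ≠ 0`, vanishes. -/
lemma aux_vanish {V : Type*} [AddCommGroup V] [Module ℂ V] [FiniteDimensional ℂ V]
    (T : V →ₗ[ℂ] V) (k : ℂ) (hk : k ≠ 0) (D : V →ₗ[ℂ] (ℂ → V))
    (hpoly : ∀ (a : V), ∃ (N : ℕ) (v : ℕ → V),
      ∀ t : ℂ, D a t = ∑ j ∈ Finset.range N, t ^ j • v j)
    (h : ∀ b l, T (D b l) - D (T b) l = (l * k) • D b l) : D = 0 := by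
  let E : ℂ → Module.End ℂ V := fun l => (LinearMap.proj l).comp D
  have hE : ∀ b l, E l b = D b l := fun b l => rfl
  let A : Module.End ℂ (Module.End ℂ V) := LinearMap.mulLeft ℂ T - LinearMap.mulRight ℂ T
  have hA : ∀ l, A (E l) = (l * k) • E l := by
    intro l
    ext b
    simpa [A, hE] using h b l
  have hfin : {l : ℂ | E l ≠ 0}.Finite := by
    have h1 : {μ : ℂ | A.HasEigenvalue μ}.Finite := Module.End.finite_hasEigenvalue A
    refine Set.Finite.of_finite_image (f := fun l => l * k) (h1.subset ?_)
      ((mul_left_injective₀ hk).injOn)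
    rintro _ ⟨l, hl, rfl⟩
    exact Module.End.hasEigenvalue_of_hasEigenvector
      ⟨Module.End.mem_eigenspace_iff.2 (hA l), hl⟩
  have hinf : {l : ℂ | E l = 0}.Infinite := by
    intro hf
    have := hf.union hfin
    refine Set.infinite_univ (α := ℂ) (this.subset ?_)
    intro l _
    by_cases hl : E l = 0
    · exact Or.inl hl
    · exact Or.inr hl
  ext b t
  rw [LinearMap.zero_apply, Pi.zero_apply, ← Module.forall_dual_apply_eq_zero_iff ℂ]
  intro φ
  obtain ⟨N, v, hv⟩ := hpoly b
  let p : Polynomial ℂ := ∑ j ∈ Finset.range N, Polynomial.X ^ j * Polynomial.C (φ (v j))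
  have hp : ∀ t, p.eval t = φ (D b t) := by
    intro t
    simp [p, hv, Polynomial.eval_finsetSum]
    exact Finset.sum_congr rfl fun j _ => mul_comm _ _
  have hp0 : p = 0 := by
    apply Polynomial.eq_zero_of_infinite_isRoot
    refine hinf.mono ?_
    intro l hl
    have hl : E l = 0 := hl
    change p.eval l = 0
    rw [hp, ← hE, hl]; simp
  rw [← hp, hp0]; simp

lemma aux_ext {V : Type*} [AddCommGroup V] [Module ℂ V]
    (circ br : V →ₗ[ℂ] V →ₗ[ℂ] V) (n N : ℕ) (hN : n ≤ N) (d : ℕ → V →ₗ[ℂ] (ℂ → V))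
    (hd : ∀ i : ℕ, n < i → d i = 0) : ConfDerEq circ br n d ↔ ConfDerEq circ br N d := by
  have key : ∀ f : ℕ → V, (∀ i, n < i → f i = 0) →
      ∑ i ∈ Finset.range (n + 1), f i = ∑ i ∈ Finset.range (N + 1), f i := by
    intro f hf
    apply Finset.sum_subset
    · intro i; simp only [Finset.mem_range]; omega
    · intro i _ hi
      simp only [Finset.mem_range] at hi
      exact hf i (by omega)
  unfold ConfDerEq
  refine forall_congr' fun a => forall_congr' fun b => forall_congr' fun l =>
    forall_congr' fun m => forall_congr' fun x => ?_
  rw [key, key, key, key, key] <;> (intro i hi; simp [hd i hi])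

lemma aux_dn {V : Type*} [AddCommGroup V] [Module ℂ V]
    (circ br : V →ₗ[ℂ] V →ₗ[ℂ] V) (e : V) (k : ℂ) (hk : k ≠ 0) (he : ∀ b, circ b e = k • b)
    (n : ℕ) (hn : 4 ≤ n) (d : ℕ → V →ₗ[ℂ] (ℂ → V))
    (hE : ConfDerEq circ br n d) : d n = 0 := by
  ext b l
  have h1 : circ (d n b l) e = 0 := by
    rw [← Module.forall_dual_apply_eq_zero_iff ℂ]
    intro φ
    refine aux_top n hn l (fun i => φ (d i (circ b e) l)) (fun i => φ (d i (circ e b + circ b e) l))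
      (fun i => φ (d i (br b e) l)) (fun i => φ (circ b (d i e l)))
      (fun i => φ (circ (d i e l) b + circ b (d i e l))) (fun i => φ (br b (d i e l)))
      (fun i => φ (circ (d i b l) e)) (fun i => φ (circ (d i b l) e + circ e (d i b l)))
      (fun i => φ (br (d i b l) e)) ?_
    intro m x
    have := congrArg φ (hE e b l m x)
    simp only [map_add (f := φ), map_smul (f := φ), map_sum (g := φ), smul_eq_mul] at this
    simp only [map_add (f := φ)]
    exact this
  rw [he] at h1
  simpa [hk] using h1

lemma aux_high {V : Type*} [AddCommGroup V] [Module ℂ V]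
    (circ br : V →ₗ[ℂ] V →ₗ[ℂ] V) (e : V) (k : ℂ) (hk : k ≠ 0) (he : ∀ b, circ b e = k • b)
    (d : ℕ → V →ₗ[ℂ] (ℂ → V)) (j : ℕ) (hd : ∀ i : ℕ, 3 + j < i → d i = 0)
    (hE : ConfDerEq circ br (3 + j) d) :
    (∀ i, 3 < i → d i = 0) ∧ ConfDerEq circ br 3 d := by
  induction j with
  | zero => exact ⟨hd, hE⟩
  | succ j ih =>
    have h0 := aux_dn circ br e k hk he (3 + (j + 1)) (by omega) d hE
    have hd' : ∀ i : ℕ, 3 + j < i → d i = 0 := by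
      intro i hi
      by_cases h : i = 3 + (j + 1)
      · rw [h, h0]
      · exact hd i (by omega)
    exact ih hd' ((aux_ext circ br (3 + j) (3 + (j + 1)) (by omega) d hd').2 hE)

end Helpers2
/-- A finite-dimensional simple Novikov algebra over `ℂ` has an element acting on the right
by a nonzero scalar. -/
lemma simple_case {V : Type*} [AddCommGroup V] [Module ℂ V] [FiniteDimensional ℂ V]
    (circ : V →ₗ[ℂ] V →ₗ[ℂ] V)
    (hNov1 : ∀ a b c : V, circ (circ a b) c - circ a (circ b c)
      = circ (circ b a) c - circ b (circ a c))
    (hNov2 : ∀ a b c : V, circ (circ a b) c = circ (circ a c) b)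
    (hs : NovikovSimple circ) :
    ∃ (x : V) (k : ℂ), k ≠ 0 ∧ ∀ b : V, circ b x = k • b := by
  obtain ⟨⟨a0, b0, hab⟩, hI⟩ := hs
  have hnt : Nontrivial V := ⟨⟨_, _, hab⟩⟩
  let R : V → Module.End ℂ V := fun c => circ.flip c
  let L : V → Module.End ℂ V := fun b => circ b
  have hR : ∀ a c, R c a = circ a c := fun _ _ => rfl
  have hL : ∀ a c, L c a = circ c a := fun _ _ => rfl
  have hcomm : ∀ a b, Commute (R a) (R b) := by
    intro a b
    ext v
    exact hNov2 v b a
  have hLR : ∀ b c, L b * R c = R c * L b + (R (circ b c) - R c * R b) := by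
    intro b c
    ext v
    simp only [Module.End.mul_apply, LinearMap.add_apply, LinearMap.sub_apply, hR, hL]
    have := hNov1 v b c
    linear_combination (norm := module) this
  -- every right multiplication has a single eigenvalue
  have hnil : ∀ c, ∃ μ : ℂ, IsNilpotent (R c - μ • 1) := by
    intro c
    obtain ⟨μ, hμ⟩ := Module.End.exists_eigenvalue (R c)
    refine ⟨μ, ?_⟩
    set S := R c - μ • (1 : Module.End ℂ V) with hS
    have hSR : ∀ b, Commute S (R b) := fun b =>
      (hcomm c b).sub_left ((Commute.one_left _).smul_left μ)
    have hSD : ∀ b, Commute S (R (circ b c) - R c * R b) := fun b =>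
      (hSR _).sub_right ((hSR _).mul_right (hSR _))
    have hLS : ∀ b, L b * S = S * L b + (R (circ b c) - R c * R b) := by
      intro b
      rw [hS, mul_sub, sub_mul, hLR]
      simp only [mul_smul_comm, smul_mul_assoc, mul_one, one_mul]
      abel
    have hLSn : ∀ b (j : ℕ), L b * S ^ (j + 1) = S ^ (j + 1) * L b
        + ((j + 1 : ℕ) : Module.End ℂ V) * ((R (circ b c) - R c * R b) * S ^ j) := by
      intro b j
      have hc := hSD b
      have h1 := hLS b
      generalize R (circ b c) - R c * R b = D at *
      induction j with
      | zero => simpa using h1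
      | succ j ih =>
        rw [pow_succ S (j + 1), ← mul_assoc, ih, add_mul, mul_assoc, h1, mul_add, ← mul_assoc,
          (hc.pow_left (j + 1)).eq, mul_assoc _ _ S, mul_assoc D _ S, ← pow_succ]
        push_cast
        noncomm_ring
    have htop := hI (Module.End.maxGenEigenspace (R c) μ) (by
      intro a ha b
      constructor
      · exact Module.End.mapsTo_maxGenEigenspace_of_comm (hcomm c b) μ ha
      · rw [Module.End.mem_maxGenEigenspace] at ha ⊢
        obtain ⟨j, hj⟩ := ha
        have hj : (S ^ j) a = 0 := hj
        refine ⟨j + 1, ?_⟩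
        change (S ^ (j + 1)) (L b a) = 0
        have h1 := congrArg (fun f => f a) (hLSn b j)
        simp only [Module.End.mul_apply, LinearMap.add_apply, hj, pow_succ', map_zero, add_zero] at h1
        rw [pow_succ', Module.End.mul_apply]
        exact h1.symm)
    have htop : Module.End.maxGenEigenspace (R c) μ = ⊤ := by
      refine htop.resolve_left ?_
      intro h
      obtain ⟨v, hv⟩ := hμ.exists_hasEigenvector
      have hm := Module.End.eigenspace_le_maxGenEigenspace hv.1
      rw [h, Submodule.mem_bot] at hm
      exact hv.2 hm
    rw [Module.End.isNilpotent_iff_of_finite]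
    intro v
    have : v ∈ Module.End.maxGenEigenspace (R c) μ := htop ▸ Submodule.mem_top
    exact (Module.End.mem_maxGenEigenspace _ _ _).1 this
  choose χ hχ using hnil
  have htr0 : ∀ f : Module.End ℂ V, IsNilpotent f → LinearMap.trace ℂ V f = 0 :=
    fun f hf => (LinearMap.isNilpotent_trace_of_isNilpotent hf).eq_zero
  have htr : ∀ c, LinearMap.trace ℂ V (R c) = χ c * Module.finrank ℂ V := by
    intro c
    have := htr0 _ (hχ c)
    rw [map_sub, map_smul, LinearMap.trace_one, sub_eq_zero] at this
    simpa using this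
  have hχmul : ∀ b c, χ (circ b c) = χ c * χ b := by
    intro b c
    have h1 : LinearMap.trace ℂ V (R (circ b c) - R c * R b) = 0 := by
      have : R (circ b c) - R c * R b = L b * R c - R c * L b := by rw [hLR]; abel
      rw [this, map_sub, LinearMap.trace_mul_comm, sub_self]
    have h2 : LinearMap.trace ℂ V ((R c - χ c • 1) * R b) = 0 := by
      apply htr0
      exact Commute.isNilpotent_mul_right
        ((hcomm c b).sub_left ((Commute.one_left _).smul_left _)) (hχ c)
    rw [sub_mul, smul_mul_assoc, one_mul, map_sub, map_smul, htr] at h2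
    rw [map_sub, htr] at h1
    have hf : (Module.finrank ℂ V : ℂ) ≠ 0 := by
      exact_mod_cast Module.finrank_pos.ne'
    apply mul_right_cancel₀ hf
    rw [smul_eq_mul] at h2
    linear_combination h1 + h2
  -- a common eigenvector, from a minimal nonzero invariant subspace
  obtain ⟨W, ⟨hW0, hWinv⟩, hWmin⟩ := WellFounded.has_min
    (wellFounded_lt : WellFounded ((· < ·) : Submodule ℂ V → Submodule ℂ V → Prop))
    {W | W ≠ ⊥ ∧ ∀ c, ∀ v ∈ W, R c v ∈ W} ⟨⊤, top_ne_bot, fun _ _ _ => Submodule.mem_top⟩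
  have hWe : ∀ c, ∀ v ∈ W, R c v = χ c • v := by
    intro c v hv
    let S := R c - χ c • (1 : Module.End ℂ V)
    have hSW : ∀ v ∈ W, S v ∈ W := fun v hv =>
      W.sub_mem (hWinv c v hv) (W.smul_mem _ hv)
    have hle : W ⊓ LinearMap.ker S ≤ W := inf_le_left
    have hmem : W ⊓ LinearMap.ker S ∈ {W | W ≠ ⊥ ∧ ∀ c, ∀ v ∈ W, R c v ∈ W} := by
      constructor
      · intro hbot
        obtain ⟨w, hw, hw0⟩ := W.ne_bot_iff.1 hW0
        obtain ⟨N, hN⟩ := hχ c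
        have hpow : ∀ j : ℕ, (S ^ j) w ∈ W ∧ (S ^ j) w ≠ 0 := by
          intro j
          induction j with
          | zero => exact ⟨hw, hw0⟩
          | succ j ih =>
            rw [pow_succ', Module.End.mul_apply]
            refine ⟨hSW _ ih.1, fun h0 => ih.2 ?_⟩
            have : (S ^ j) w ∈ W ⊓ LinearMap.ker S := ⟨ih.1, h0⟩
            rwa [hbot, Submodule.mem_bot] at this
        exact (hpow N).2 (by change ((R c - χ c • 1) ^ N) w = 0; rw [hN]; rfl)
      · rintro b v ⟨h1, h2⟩
        refine ⟨hWinv b v h1, ?_⟩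
        have hc : Commute S (R b) := (hcomm c b).sub_left ((Commute.one_left _).smul_left _)
        have h3 := congrArg (fun f => f v) hc.eq
        have h2 : S v = 0 := h2
        simp only [Module.End.mul_apply, h2, map_zero] at h3
        exact h3
    have hnot := hWmin _ hmem
    have heq : W ⊓ LinearMap.ker S = W := by
      by_contra hne
      exact hnot (lt_of_le_of_ne hle hne)
    have hk : v ∈ W ⊓ LinearMap.ker S := heq.symm ▸ hv
    have : S v = 0 := hk.2
    exact sub_eq_zero.1 this
  let I : Submodule ℂ V := ⨅ c, LinearMap.ker (R c - χ c • (1 : Module.End ℂ V))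
  have hImem : ∀ v, v ∈ I ↔ ∀ c, R c v = χ c • v := by
    intro v
    simp [I, Submodule.mem_iInf, sub_eq_zero]
  have hItop : I = ⊤ := by
    refine (hI I ?_).resolve_left ?_
    · intro a ha b
      have ha' := (hImem a).1 ha
      constructor
      · have : circ a b = χ b • a := ha' b
        rw [this]
        exact I.smul_mem _ ha
      · rw [hImem]
        intro c
        have h1 := congrArg (fun f => f a) (hLR b c)
        simp only [Module.End.mul_apply, LinearMap.add_apply, LinearMap.sub_apply, ha', map_smul,
          hχmul] at h1
        rw [hL] at h1
        rw [h1]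
        module
    · intro hbot
      obtain ⟨w, hw, hw0⟩ := W.ne_bot_iff.1 hW0
      have : w ∈ I := (hImem w).2 fun c => hWe c w hw
      rw [hbot, Submodule.mem_bot] at this
      exact hw0 this
  have hall : ∀ b c, circ b c = χ c • b := fun b c =>
    (hImem b).1 (hItop ▸ Submodule.mem_top) c
  refine ⟨b0, χ b0, ?_, fun b => hall b b0⟩
  intro h
  apply hab
  rw [hall, h, zero_smul]

lemma main_ids {V : Type*} [AddCommGroup V] [Module ℂ V] [FiniteDimensional ℂ V]
    (circ br : V →ₗ[ℂ] V →ₗ[ℂ] V) (e : V) (k : ℂ) (hk : k ≠ 0) (he : ∀ b, circ b e = k • b)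
    (d : ℕ → V →ₗ[ℂ] (ℂ → V))
    (hpoly : ∀ (i : ℕ) (a : V), ∃ (N : ℕ) (v : ℕ → V),
      ∀ t : ℂ, d i a t = ∑ j ∈ Finset.range N, t ^ j • v j)
    (hE : ConfDerEq circ br 3 d) : DIdentities circ br d := by
  have hx : ∀ (a b : V) (l m x : ℂ), _ := fun a b l m x => sub_eq_zero.2 (hE a b l m x)
  simp only [Finset.sum_range_succ, Finset.sum_range_zero, map_add, Pi.add_apply] at hx
  -- `d^3 = 0` from the coefficients of `x^3`
  have h3 : d 3 = 0 := by
    refine aux_vanish (br.flip e) k hk (d 3) (hpoly 3) ?_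
    intro b l
    obtain ⟨-, -, -, h, -⟩ := aux_four
      (l • d 0 (circ b e) l + d 0 (br b e) l
        - ((br b (d 0 e l) - l • br b (d 1 e l) + l ^ 2 • br b (d 2 e l) - l ^ 3 • br b (d 3 e l))
          + l • (circ (d 0 e l) b + circ b (d 0 e l))
          - l ^ 2 • (circ (d 1 e l) b + circ b (d 1 e l))
          + l ^ 3 • (circ (d 2 e l) b + circ b (d 2 e l))
          - l ^ 4 • (circ (d 3 e l) b + circ b (d 3 e l)) + br (d 0 b l) e))
      (l • d 1 (circ b e) l + d 0 (circ b e) l + d 1 (br b e) l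
        - ((circ b (d 0 e l) - l • circ b (d 1 e l) + l ^ 2 • circ b (d 2 e l)
          - l ^ 3 • circ b (d 3 e l)) + circ (d 0 b l) e + br (d 1 b l) e))
      (l • d 2 (circ b e) l + d 1 (circ b e) l + d 2 (br b e) l
        - (circ (d 1 b l) e + br (d 2 b l) e))
      (l • d 3 (circ b e) l + d 2 (circ b e) l + d 3 (br b e) l
        - (br (d 3 b l) e + circ (d 2 b l) e))
      (d 3 (circ b e) l - circ (d 3 b l) e)
      (by
        intro x
        linear_combination (norm := module) hx e b l 0 x)
    simp only [he, map_smul, Pi.smul_apply] at h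
    simp only [LinearMap.flip_apply]
    linear_combination (norm := module) -h
  simp only [h3, LinearMap.zero_apply, Pi.zero_apply, map_zero, smul_zero, add_zero] at hx
  have h2 : d 2 = 0 := by
    refine aux_vanish (br.flip e) k hk (d 2) (hpoly 2) ?_
    intro b l
    obtain ⟨-, -, h, -, -⟩ := aux_four
      (l • d 0 (circ b e) l + d 0 (br b e) l
        - ((br b (d 0 e l) - l • br b (d 1 e l) + l ^ 2 • br b (d 2 e l))
          + l • (circ (d 0 e l) b + circ b (d 0 e l))
          - l ^ 2 • (circ (d 1 e l) b + circ b (d 1 e l))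
          + l ^ 3 • (circ (d 2 e l) b + circ b (d 2 e l)) + br (d 0 b l) e))
      (l • d 1 (circ b e) l + d 0 (circ b e) l + d 1 (br b e) l
        - ((circ b (d 0 e l) - l • circ b (d 1 e l) + l ^ 2 • circ b (d 2 e l))
          + circ (d 0 b l) e + br (d 1 b l) e))
      (l • d 2 (circ b e) l + d 1 (circ b e) l + d 2 (br b e) l
        - (circ (d 1 b l) e + br (d 2 b l) e))
      (d 2 (circ b e) l - circ (d 2 b l) e)
      0
      (by
        intro x
        linear_combination (norm := module) hx e b l 0 x)
    simp only [he, map_smul, Pi.smul_apply] at h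
    simp only [LinearMap.flip_apply]
    linear_combination (norm := module) -h
  simp only [h2, LinearMap.zero_apply, Pi.zero_apply, map_zero, smul_zero, add_zero] at hx
  intro a b l
  -- coefficients of the powers of `x`, as polynomials in `m`
  have hm : ∀ m : ℂ, _ := fun m => aux_four
      (l • d 0 (circ b a) l + d 0 (br b a) l
        - ((br b (d 0 a l) - l • br b (d 1 a l))
          + l • (circ (d 0 a l) b + circ b (d 0 a l))
          - l ^ 2 • (circ (d 1 a l) b + circ b (d 1 a l)) + br (d 0 b l) a)
        + m • (d 0 (circ a b) l + d 0 (circ b a) l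
          - ((circ (d 0 a l) b + circ b (d 0 a l))
            - (2 * l) • (circ (d 1 a l) b + circ b (d 1 a l)) - br b (d 1 a l)
            + (circ (d 0 b l) a + circ a (d 0 b l)) + br (d 1 b l) a))
        + m ^ 2 • ((circ (d 1 a l) b + circ b (d 1 a l))
            - (circ (d 1 b l) a + circ a (d 1 b l))))
      (l • d 1 (circ b a) l + d 0 (circ b a) l + d 1 (br b a) l
        - ((circ b (d 0 a l) - l • circ b (d 1 a l)) + circ (d 0 b l) a + br (d 1 b l) a)
        + m • (d 1 (circ a b) l + d 1 (circ b a) l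
          - (- circ b (d 1 a l) + circ (d 1 b l) a + (circ (d 1 b l) a + circ a (d 1 b l)))))
      (d 1 (circ b a) l - circ (d 1 b l) a)
      0 0
      (by
        intro x
        linear_combination (norm := module) hx a b l m x)
  obtain ⟨g0, g1, g2⟩ := aux_two _ _ _ (fun m => (hm m).1)
  obtain ⟨f0, f1⟩ := aux_one _ _ (fun m => (hm m).2.1)
  have e0 := (hm 0).2.2.1
  have hI2 : Finset.Icc (2 : ℕ) 3 = {2, 3} := rfl
  have hI1 : Finset.Icc (1 : ℕ) 3 = {1, 2, 3} := rfl
  simp only [h2, h3, hI1, hI2, Finset.sum_range_succ, Finset.sum_range_zero, map_add, Pi.add_apply,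
    LinearMap.zero_apply, Pi.zero_apply, map_zero, smul_zero, add_zero, zero_add, sub_zero,
    Finset.sum_insert, Finset.sum_singleton, Finset.mem_insert, Finset.mem_singleton,
    OfNat.one_ne_ofNat, Nat.reduceEqDiff, or_self, not_false_eq_true,
    true_and, and_true, and_self]
  norm_num
  refine ⟨?_, ?_, ?_, ?_, ?_, ?_⟩
  · linear_combination (norm := module) e0
  · linear_combination (norm := module) f1
  · linear_combination (norm := module) -g2
  · linear_combination (norm := module) f0
  · linear_combination (norm := module) g1
  · linear_combination (norm := module) g0

/-- Let `V` be a finite-dimensional Gel'fand–Dorfman bialgebra over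
`ℂ` such that either `(V,∘)` is a simple Novikov algebra, or there exist `x ∈ V` and
`k ≠ 0` with `b∘x = k·b` for all `b`.  If `d^0, …, d^n` are linear maps from `V` into
the space of polynomial maps `ℂ → V` satisfying the conformal derivation equation (E),
then `d^i = 0` for all `i > 3` and `d^0, d^1, d^2, d^3` satisfy (D1)–(D13). -/
theorem stmt_11 {V : Type*} [AddCommGroup V] [Module ℂ V] [FiniteDimensional ℂ V]
    (circ br : V →ₗ[ℂ] V →ₗ[ℂ] V)
    -- Novikov algebra axioms for `∘ = circ`
    (hNov1 : ∀ a b c : V, circ (circ a b) c - circ a (circ b c)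
      = circ (circ b a) c - circ b (circ a c))
    (hNov2 : ∀ a b c : V, circ (circ a b) c = circ (circ a c) b)
    -- Lie algebra axioms for `[·,·] = br`
    (hSkew : ∀ a b : V, br a b = - br b a)
    (hJacobi : ∀ a b c : V, br (br a b) c + br (br b c) a + br (br c a) b = 0)
    -- compatibility condition of the Gel'fand–Dorfman bialgebra
    (hCompat : ∀ a b c : V, br (circ a b) c - br (circ a c) b + circ (br a b) c
      - circ (br a c) b - circ a (br b c) = 0)
    -- `(V,∘)` is simple, or has an element `x` with `b∘x = k·b` for all `b`
    (hcase : NovikovSimple circ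
      ∨ ∃ (x : V) (k : ℂ), k ≠ 0 ∧ ∀ b : V, circ b x = k • b)
    (n : ℕ) (d : ℕ → V →ₗ[ℂ] (ℂ → V))
    -- the family consists only of `d^0, …, d^n` (so `d^i = 0` for `i > n`)
    (hd : ∀ i : ℕ, n < i → d i = 0)
    -- each `d^i(a)` is a polynomial map `ℂ → V`
    (hpoly : ∀ (i : ℕ) (a : V), ∃ (N : ℕ) (v : ℕ → V),
      ∀ t : ℂ, d i a t = ∑ j ∈ Finset.range N, t ^ j • v j)
    (hE : ConfDerEq circ br n d) :
    (∀ i : ℕ, 3 < i → d i = 0) ∧ DIdentities circ br d := by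
  obtain ⟨e, k, hk, he⟩ : ∃ (x : V) (k : ℂ), k ≠ 0 ∧ ∀ b : V, circ b x = k • b :=
    hcase.elim (simple_case circ hNov1 hNov2) id
  have hE' : ConfDerEq circ br (3 + n) d := (aux_ext circ br n (3 + n) (by omega) d hd).1 hE
  obtain ⟨h1, h2⟩ := aux_high circ br e k hk he d n (fun i hi => hd i (by omega)) hE'
  exact ⟨h1, main_ids circ br e k hk he d hpoly h2⟩
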